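/- Let α > 0 and let a, b, c be real numbers. Let A : ℝ → ℝ be a smooth 1-periodic function with ∫₀¹ A(x) dx = 4α·(ac − b²). Then there exists a smooth 1-periodic function φ : ℝ → ℝ with 1 + φ''(x) > 0 for all x, such that for all x ∈ ℝ: −(1/4)·(d²/dx²)(1/(1+φ''(x))) − 2α·(a² + c²) − 4α·b²·(1 + φ''(x)) + 2α·(a + c)² = A(x). -/

import Mathlib

/-!
In terms of `u = 1 / (1 + φ'')` the equation becomes `u'' = g - k / u` with `k = 16 α b² ≥ 0`, and
`1 / u - 1` is the second derivative of a periodic function if and only if `∫ 1 / u = 1`. The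
condition on `∫ A` says that `∫ g = k`.

If `k > 0`, the right-hand side is increasing in `u`, so a positive solution is found between a
lower and an upper solution. Integrating the equation gives `k ∫ 1 / u = ∫ g = k`.

If `k = 0`, then `u` is a double primitive of `g` plus a constant, and that constant is chosen so
that `∫ 1 / u = 1`. The integral takes arbitrarily large values because a Lipschitz function
stays close to its minimum long enough for `∫ 1 / u` to diverge logarithmically.
-/

open Set Function
open scoped ContDiff BoundedContinuousFunction NNReal

/-- `u` is a classical `T`-periodic solution of the second order equation `u'' = h(x, u)`. -/
structure IsPeriodicSolution (h : ℝ → ℝ → ℝ) (T : ℝ) (u : ℝ → ℝ) : Prop where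
  contDiff : ContDiff ℝ 2 u
  periodic : Periodic u T
  deriv_deriv : ∀ x, deriv (deriv u) x = h x (u x)

/-- `u` is a classical `T`-periodic lower solution (subsolution) of `u'' = h(x, u)`. -/
structure IsPeriodicLowerSolution (h : ℝ → ℝ → ℝ) (T : ℝ) (u : ℝ → ℝ) : Prop where
  contDiff : ContDiff ℝ 2 u
  periodic : Periodic u T
  le_deriv_deriv : ∀ x, h x (u x) ≤ deriv (deriv u) x

/-- `u` is a classical `T`-periodic upper solution (supersolution) of `u'' = h(x, u)`. -/
structure IsPeriodicUpperSolution (h : ℝ → ℝ → ℝ) (T : ℝ) (u : ℝ → ℝ) : Prop where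
  contDiff : ContDiff ℝ 2 u
  periodic : Periodic u T
  deriv_deriv_le : ∀ x, deriv (deriv u) x ≤ h x (u x)

variable {T : ℝ}

theorem periodic_deriv {f : ℝ → ℝ} (hper : Periodic f T) : Periodic (deriv f) T := fun x => by
  rw [← deriv_comp_add_const, funext hper]

namespace IsPeriodicSolution

variable {h : ℝ → ℝ → ℝ} {u : ℝ → ℝ}

theorem isPeriodicLowerSolution (hu : IsPeriodicSolution h T u) :
    IsPeriodicLowerSolution h T u :=
  ⟨hu.contDiff, hu.periodic, fun x => (hu.deriv_deriv x).ge⟩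

theorem isPeriodicUpperSolution (hu : IsPeriodicSolution h T u) :
    IsPeriodicUpperSolution h T u :=
  ⟨hu.contDiff, hu.periodic, fun x => (hu.deriv_deriv x).le⟩

theorem of_hasDerivAt {v : ℝ → ℝ} (hper : Periodic u T) (hu : ∀ x, HasDerivAt u (v x) x)
    (hv : ∀ x, HasDerivAt v (h x (u x)) x) (hcont : Continuous fun x => h x (u x)) :
    IsPeriodicSolution h T u := by
  have deriv_u : deriv u = v := funext fun x => (hu x).deriv
  have deriv_v : deriv v = fun x => h x (u x) := funext fun x => (hv x).deriv
  have hv1 : ContDiff ℝ 1 v :=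
    contDiff_one_iff_deriv.2 ⟨fun x => (hv x).differentiableAt, deriv_v ▸ hcont⟩
  refine ⟨?_, hper, fun x => by rw [deriv_u, deriv_v]⟩
  rw [← one_add_one_eq_two, contDiff_succ_iff_deriv, deriv_u]
  exact ⟨fun x => (hu x).differentiableAt, by simp, hv1⟩

theorem integral_eq_zero (hu : IsPeriodicSolution h T u) : ∫ x in 0..T, h x (u x) = 0 := by
  have hu1 : ContDiff ℝ 1 (deriv u) := hu.contDiff.deriv'
  simp_rw [← hu.deriv_deriv]
  rw [intervalIntegral.integral_deriv_eq_sub (fun x _ => hu1.differentiable one_ne_zero x)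
    ((hu1.continuous_deriv le_rfl).intervalIntegrable _ _), (periodic_deriv hu.periodic).eq,
    sub_self]

/-- Bootstrapping: `u ∈ C^n` makes `u'' = h(x, u)` of class `C^n`, hence `u ∈ C^(n+2)`. -/
theorem contDiff_infty (hu : IsPeriodicSolution h T u)
    (hh : ∀ x, ContDiffAt ℝ ∞ (uncurry h) (x, u x)) : ContDiff ℝ ∞ u := by
  rw [_root_.contDiff_infty]
  intro n
  induction n with
  | zero => exact contDiff_zero.2 hu.contDiff.continuous
  | succ n ih =>
    have deriv_deriv_eq : deriv (deriv u) = fun x => h x (u x) := funext hu.deriv_deriv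
    have hrhs : ContDiff ℝ n (deriv (deriv u)) := by
      rw [deriv_deriv_eq, contDiff_iff_contDiffAt]
      exact fun x => ContDiffAt.comp (g := uncurry h) x ((hh x).of_le (mod_cast le_top))
        (contDiff_id.prodMk ih).contDiffAt
    have hu1 : ContDiff ℝ (n + 1) (deriv u) := contDiff_succ_iff_deriv.2
      ⟨hu.contDiff.deriv'.differentiable one_ne_zero, by simp, hrhs⟩
    exact contDiff_succ_iff_deriv.2
      ⟨hu.contDiff.differentiable two_ne_zero, by simp, hu1.of_le le_self_add⟩

end IsPeriodicSolution

theorem deriv_deriv_nonneg_of_isLocalMin {f : ℝ → ℝ} {x₀ : ℝ} (hf : ContinuousAt f x₀)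
    (hmin : IsLocalMin f x₀) : 0 ≤ deriv (deriv f) x₀ := by
  by_contra! hneg
  have hmax : IsLocalMax f x₀ := isLocalMax_of_deriv_deriv_neg hneg hmin.deriv_eq_zero hf
  have hconst : f =ᶠ[nhds x₀] fun _ => f x₀ := by
    filter_upwards [hmin, hmax] with x h₁ h₂ using le_antisymm h₂ h₁
  have hzero : deriv (deriv f) x₀ = 0 := by simp [hconst.deriv.deriv_eq]
  exact hneg.ne hzero

theorem exists_forall_le_of_periodic {f : ℝ → ℝ} (hf : Continuous f) (hper : Periodic f T)
    (hT : T ≠ 0) : ∃ x₀, ∀ x, f x₀ ≤ f x := by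
  obtain ⟨_, ⟨x₀, rfl⟩, hx₀⟩ :=
    (hper.compact_of_continuous hT hf).exists_isLeast (range_nonempty f)
  exact ⟨x₀, fun x => hx₀ (mem_range_self x)⟩

theorem exists_forall_abs_le_of_periodic {f : ℝ → ℝ} (hf : Continuous f) (hper : Periodic f T)
    (hT : T ≠ 0) : ∃ B, ∀ x, |f x| ≤ B := by
  obtain ⟨B, hB⟩ := (hper.isBounded_of_continuous hT hf).exists_norm_le
  exact ⟨B, fun x => hB _ (mem_range_self x)⟩

theorem exists_lipschitzWith_of_periodic {f : ℝ → ℝ} (hf : ContDiff ℝ 1 f) (hper : Periodic f T)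
    (hT : T ≠ 0) : ∃ K, LipschitzWith K f := by
  obtain ⟨B, hB⟩ :=
    exists_forall_abs_le_of_periodic (hf.continuous_deriv le_rfl) (periodic_deriv hper) hT
  exact ⟨B.toNNReal, lipschitzWith_of_nnnorm_deriv_le (hf.differentiable one_ne_zero)
    fun x => NNReal.le_toNNReal_of_coe_le (hB x)⟩

/-- Comparison: `hi - lo` cannot have a negative minimum, since there its second derivative
would be negative. -/
theorem IsPeriodicLowerSolution.le_upperSolution {h : ℝ → ℝ → ℝ} {lo hi : ℝ → ℝ}
    (hlo : IsPeriodicLowerSolution h T lo) (hhi : IsPeriodicUpperSolution h T hi) (hT : T ≠ 0)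
    (hmono : ∀ x, StrictMono (h x)) : lo ≤ hi := by
  have hcont : Continuous (hi - lo) := hhi.contDiff.continuous.sub hlo.contDiff.continuous
  obtain ⟨x₀, hx₀⟩ := exists_forall_le_of_periodic hcont (hhi.periodic.sub hlo.periodic) hT
  suffices lo x₀ ≤ hi x₀ from fun x => sub_nonneg.1 ((sub_nonneg.2 this).trans (hx₀ x))
  by_contra! hlt
  have hsub : deriv (deriv (hi - lo)) x₀ = deriv (deriv hi) x₀ - deriv (deriv lo) x₀ := by
    simpa [iteratedDeriv_succ] using
      iteratedDeriv_sub (n := 2) hhi.contDiff.contDiffAt hlo.contDiff.contDiffAt (x := x₀)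
  have hnonneg := deriv_deriv_nonneg_of_isLocalMin hcont.continuousAt
    (Filter.Eventually.of_forall hx₀ : IsLocalMin (hi - lo) x₀)
  linarith [hmono x₀ hlt, hlo.le_deriv_deriv x₀, hhi.deriv_deriv_le x₀]

theorem exists_periodic_primitive {f : ℝ → ℝ} (hf : Continuous f) (hper : Periodic f T)
    (hint : ∫ x in 0..T, f x = 0) :
    ∃ F : ℝ → ℝ, Periodic F T ∧ ∀ x, HasDerivAt F (f x) x := by
  refine ⟨fun x => ∫ y in 0..x, f y, fun x => ?_,
    fun x => (hf.integral_hasStrictDerivAt 0 x).hasDerivAt⟩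
  simp only [hper.intervalIntegral_add_eq_add 0 x (fun _ _ => hf.intervalIntegrable _ _),
    zero_add, hint, add_zero]

theorem integral_sub_integral_div_eq_zero {f : ℝ → ℝ} (hf : Continuous f) (hT : T ≠ 0) :
    ∫ x in 0..T, (f x - (∫ y in 0..T, f y) / T) = 0 := by
  rw [intervalIntegral.integral_sub (hf.intervalIntegrable _ _) (by simp),
    intervalIntegral.integral_const, sub_zero, smul_eq_mul, mul_div_cancel₀ _ hT, sub_self]

theorem exists_periodic_primitive_integral_eq_zero {f : ℝ → ℝ} (hf : Continuous f)
    (hper : Periodic f T) (hT : T ≠ 0) (hint : ∫ x in 0..T, f x = 0) :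
    ∃ F : ℝ → ℝ, Periodic F T ∧ (∀ x, HasDerivAt F (f x) x) ∧ ∫ x in 0..T, F x = 0 := by
  obtain ⟨F, hFper, hF⟩ := exists_periodic_primitive hf hper hint
  have hFcont : Continuous F := continuous_iff_continuousAt.2 fun x => (hF x).continuousAt
  refine ⟨fun x => F x - (∫ y in 0..T, F y) / T, fun x => by simp only [hFper x],
    fun x => (hF x).sub_const _, integral_sub_integral_div_eq_zero hFcont hT⟩

theorem exists_isPeriodicSolution_of_integral_eq_zero {f : ℝ → ℝ} (hf : Continuous f)
    (hper : Periodic f T) (hT : T ≠ 0) (hint : ∫ x in 0..T, f x = 0) :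
    ∃ u, IsPeriodicSolution (fun x _ => f x) T u := by
  obtain ⟨F, hFper, hF, hFint⟩ := exists_periodic_primitive_integral_eq_zero hf hper hT hint
  have hFcont : Continuous F := continuous_iff_continuousAt.2 fun x => (hF x).continuousAt
  obtain ⟨u, huper, hu⟩ := exists_periodic_primitive hFcont hFper hFint
  exact ⟨u, .of_hasDerivAt huper hu hF hf⟩

/-- The solution is the convolution `(exp (s * T) - 1)⁻¹ * ∫ y in 0..T, exp (s * y) * f (x + y)`,
which is periodic in `x` at sight; substituting `x + y` makes it differentiable at sight. -/
theorem exists_periodic_hasDerivAt_sub_mul {f : ℝ → ℝ} {s : ℝ} (hf : Continuous f)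
    (hper : Periodic f T) (hT : T ≠ 0) (hs : s ≠ 0) :
    ∃ v : ℝ → ℝ, Periodic v T ∧ ∀ x, HasDerivAt v (f x - s * v x) x := by
  set C : ℝ := Real.exp (s * T) - 1 with hC
  have hC0 : C ≠ 0 := sub_ne_zero.2 (by simp [hs, hT])
  set I : ℝ → ℝ := fun x => ∫ y in 0..x, Real.exp (s * y) * f y
  have hcont : Continuous fun y => Real.exp (s * y) * f y := by fun_prop
  have hI : ∀ x, HasDerivAt I (Real.exp (s * x) * f x) x :=
    fun x => (hcont.integral_hasStrictDerivAt 0 x).hasDerivAt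
  have hconv : ∀ x, ∫ y in 0..T, Real.exp (s * y) * f (x + y) =
      Real.exp (-(s * x)) * (I (x + T) - I x) := fun x => by
    rw [intervalIntegral.integral_interval_sub_left (hcont.intervalIntegrable _ _)
      (hcont.intervalIntegrable _ _), ← intervalIntegral.integral_const_mul]
    simp_rw [← mul_assoc, ← Real.exp_add]
    simpa [mul_add] using intervalIntegral.integral_comp_add_left (a := 0) (b := T)
      (fun y => Real.exp (-(s * x) + s * y) * f y) x
  refine ⟨fun x => C⁻¹ * ∫ y in 0..T, Real.exp (s * y) * f (x + y), fun x => ?_, fun x => ?_⟩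
  · simp only [add_right_comm x T, hper _]
  · simp only [hconv]
    have hexp : HasDerivAt (fun x => Real.exp (-(s * x))) (Real.exp (-(s * x)) * -(s * 1)) x :=
      ((hasDerivAt_id x).const_mul s).neg.exp
    refine ((hexp.mul (((hI (x + T)).comp_add_const x T).sub (hI x))).const_mul C⁻¹).congr_deriv ?_
    rw [hper x, Pi.sub_apply, mul_add s x T, Real.exp_add, Real.exp_neg]
    field_simp
    rw [hC]
    ring

/-- Factor `D² - s²` as `(D - s) (D + s)` and invert one factor at a time. -/
theorem exists_isPeriodicSolution_mul_sub {f : ℝ → ℝ} {Λ : ℝ} (hf : Continuous f)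
    (hper : Periodic f T) (hT : T ≠ 0) (hΛ : 0 < Λ) :
    ∃ u, IsPeriodicSolution (fun x y => Λ * y - f x) T u := by
  set s := √Λ
  have hs : s ≠ 0 := (Real.sqrt_pos.2 hΛ).ne'
  have hs_sq : s * s = Λ := Real.mul_self_sqrt hΛ.le
  obtain ⟨v, hvper, hv⟩ := exists_periodic_hasDerivAt_sub_mul hf.fun_neg
    (fun x => congrArg Neg.neg (hper x)) hT (neg_ne_zero.2 hs)
  have hvcont : Continuous v := continuous_iff_continuousAt.2 fun x => (hv x).continuousAt
  obtain ⟨u, huper, hu⟩ := exists_periodic_hasDerivAt_sub_mul hvcont hvper hT hs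
  have hucont : Continuous u := continuous_iff_continuousAt.2 fun x => (hu x).continuousAt
  refine ⟨u, .of_hasDerivAt huper hu (fun x => ?_) (by fun_prop)⟩
  refine ((hv x).sub ((hu x).const_mul s)).congr_deriv ?_
  rw [← hs_sq]
  ring

theorem IsPeriodicSolution.le_add_div {f₁ f₂ v₁ v₂ : ℝ → ℝ} {Λ C : ℝ} (hT : T ≠ 0) (hΛ : 0 < Λ)
    (hv₁ : IsPeriodicSolution (fun x y => Λ * y - f₁ x) T v₁)
    (hv₂ : IsPeriodicSolution (fun x y => Λ * y - f₂ x) T v₂)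
    (hf : ∀ x, f₁ x ≤ f₂ x + C) (x : ℝ) : v₁ x ≤ v₂ x + C / Λ := by
  have hupper : IsPeriodicUpperSolution (fun x y => Λ * y - f₁ x) T fun x => v₂ x + C / Λ := by
    refine ⟨hv₂.contDiff.add contDiff_const, fun x => by simp only [hv₂.periodic x], fun x => ?_⟩
    simp only [deriv_add_const', hv₂.deriv_deriv, mul_add, mul_div_cancel₀ C hΛ.ne']
    linarith [hf x]
  exact hv₁.isPeriodicLowerSolution.le_upperSolution hupper hT
    (fun x _ _ hpq => sub_lt_sub_right (mul_lt_mul_of_pos_left hpq hΛ) _) x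

theorem IsPeriodicSolution.abs_sub_le_div {f₁ f₂ v₁ v₂ : ℝ → ℝ} {Λ C : ℝ} (hT : T ≠ 0)
    (hΛ : 0 < Λ) (hv₁ : IsPeriodicSolution (fun x y => Λ * y - f₁ x) T v₁)
    (hv₂ : IsPeriodicSolution (fun x y => Λ * y - f₂ x) T v₂)
    (hf : ∀ x, |f₁ x - f₂ x| ≤ C) (x : ℝ) : |v₁ x - v₂ x| ≤ C / Λ := by
  have h₁ := hv₁.le_add_div (C := C) hT hΛ hv₂ (fun x => by linarith [(abs_le.1 (hf x)).2]) x
  have h₂ := hv₂.le_add_div (C := C) hT hΛ hv₁ (fun x => by linarith [(abs_le.1 (hf x)).1]) x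
  exact abs_le.2 ⟨by linarith, by linarith⟩

section LowerUpper

variable {h : ℝ → ℝ → ℝ} {lo hi : ℝ → ℝ} {δ Λ : ℝ}

/-- The order interval of continuous `T`-periodic functions between `lo` and `hi`, as a set of
bounded continuous functions so that it carries the complete uniform distance. -/
def periodicIcc (T : ℝ) (lo hi : ℝ → ℝ) : Set (ℝ →ᵇ ℝ) :=
  {u | Periodic u T ∧ ∀ x, u x ∈ Icc (lo x) (hi x)}

theorem isClosed_periodicIcc : IsClosed (periodicIcc T lo hi) := by
  have heval : ∀ x : ℝ, Continuous fun u : ℝ →ᵇ ℝ => u x := fun x => continuous_eval_const x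
  simp only [periodicIcc, Periodic, ofPred_and, ofPred_forall]
  exact (isClosed_iInter fun x => isClosed_eq (heval _) (heval _)).inter
    (isClosed_iInter fun x => isClosed_Icc.preimage (heval x))

theorem exists_mem_periodicIcc_coe_eq {u : ℝ → ℝ} (hT : T ≠ 0) (hu : Continuous u)
    (hper : Periodic u T) (hmem : ∀ x, u x ∈ Icc (lo x) (hi x)) :
    ∃ U ∈ periodicIcc T lo hi, ⇑U = u :=
  ⟨⟨⟨u, hu⟩, Metric.isBounded_range_iff.1 (hper.isBounded_of_continuous hT hu)⟩,
    ⟨hper, hmem⟩, rfl⟩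

/-- One step of the iteration `u'' - Λ u = h(x, u_prev) - Λ u_prev`: monotonicity of
`y ↦ Λ y - h(x, y)` makes `lo` and `hi` lower and upper solutions of the linear problem. -/
theorem exists_isPeriodicSolution_linearized (hT : T ≠ 0) (hΛ : 0 < Λ)
    (hcont : ContinuousOn (uncurry h) {p | p.2 ∈ Icc (lo p.1) (hi p.1)})
    (hper : ∀ y, Periodic (fun x => h x y) T)
    (hmono : ∀ x, MonotoneOn (fun y => Λ * y - h x y) (Icc (lo x) (hi x)))
    (hlo : IsPeriodicLowerSolution h T lo) (hhi : IsPeriodicUpperSolution h T hi)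
    {u : ℝ →ᵇ ℝ} (hu : u ∈ periodicIcc T lo hi) :
    ∃ v ∈ periodicIcc T lo hi,
      IsPeriodicSolution (fun x y => Λ * y - (Λ * u x - h x (u x))) T v := by
  have hhu : Continuous fun x => h x (u x) :=
    hcont.comp_continuous (continuous_id.prodMk u.continuous) hu.2
  have hf : Periodic (fun x => Λ * u x - h x (u x)) T := fun x => by
    simp only [hu.1 x, hper (u x) x]
  obtain ⟨v, hv⟩ := exists_isPeriodicSolution_mul_sub
    ((u.continuous.const_mul Λ).sub hhu) hf hT hΛ
  have hstrict : ∀ x, StrictMono fun y => Λ * y - (Λ * u x - h x (u x)) :=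
    fun x _ _ hpq => sub_lt_sub_right (mul_lt_mul_of_pos_left hpq hΛ) _
  have hle : ∀ x, lo x ≤ hi x := fun x => (hu.2 x).1.trans (hu.2 x).2
  have hlo' : IsPeriodicLowerSolution (fun x y => Λ * y - (Λ * u x - h x (u x))) T lo :=
    ⟨hlo.contDiff, hlo.periodic, fun x => by
      linarith [hlo.le_deriv_deriv x, hmono x (left_mem_Icc.2 (hle x)) (hu.2 x) (hu.2 x).1]⟩
  have hhi' : IsPeriodicUpperSolution (fun x y => Λ * y - (Λ * u x - h x (u x))) T hi :=
    ⟨hhi.contDiff, hhi.periodic, fun x => by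
      linarith [hhi.deriv_deriv_le x, hmono x (hu.2 x) (right_mem_Icc.2 (hle x)) (hu.2 x).2]⟩
  obtain ⟨V, hV, rfl⟩ := exists_mem_periodicIcc_coe_eq hT hv.contDiff.continuous hv.periodic
    fun x => ⟨hlo'.le_upperSolution hv.isPeriodicUpperSolution hT hstrict x,
      hv.isPeriodicLowerSolution.le_upperSolution hhi' hT hstrict x⟩
  exact ⟨V, hV, hv⟩

theorem abs_sub_le_of_monotoneOn_of_monotoneOn {f : ℝ → ℝ} {s : Set ℝ} {L p q : ℝ}
    (hf : MonotoneOn f s) (hLf : MonotoneOn (fun y => L * y - f y) s) (hp : p ∈ s) (hq : q ∈ s) :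
    |f p - f q| ≤ L * |p - q| := by
  wlog hpq : p ≤ q generalizing p q
  · rw [abs_sub_comm (f p), abs_sub_comm p]
    exact this hq hp (le_of_not_ge hpq)
  rw [abs_sub_comm (f p), abs_sub_comm p, abs_of_nonneg (sub_nonneg.2 (hf hp hq hpq)),
    abs_of_nonneg (sub_nonneg.2 hpq)]
  linarith [hLf hp hq hpq]

/-- The method of lower and upper solutions, by a contraction: on the order interval, the map
`y ↦ Λ y - h(x, y)` is `(Λ - δ)`-Lipschitz while inverting `Λ - D²` gains a factor `Λ⁻¹`. -/
theorem exists_isPeriodicSolution_mem_Icc (hT : T ≠ 0) (hδ : 0 < δ) (hδΛ : δ ≤ Λ)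
    (hcont : ContinuousOn (uncurry h) {p | p.2 ∈ Icc (lo p.1) (hi p.1)})
    (hper : ∀ y, Periodic (fun x => h x y) T)
    (hmono_δ : ∀ x, MonotoneOn (fun y => h x y - δ * y) (Icc (lo x) (hi x)))
    (hmono_Λ : ∀ x, MonotoneOn (fun y => Λ * y - h x y) (Icc (lo x) (hi x)))
    (hlo : IsPeriodicLowerSolution h T lo) (hhi : IsPeriodicUpperSolution h T hi)
    (hle : ∀ x, lo x ≤ hi x) :
    ∃ u, IsPeriodicSolution h T u ∧ ∀ x, u x ∈ Icc (lo x) (hi x) := by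
  have hΛ : 0 < Λ := hδ.trans_le hδΛ
  have hstep : ∀ u : periodicIcc T lo hi, ∃ v : periodicIcc T lo hi,
      IsPeriodicSolution (fun x y => Λ * y - (Λ * u.1 x - h x (u.1 x))) T v.1 := fun u =>
    let ⟨v, hv, hsol⟩ := exists_isPeriodicSolution_linearized hT hΛ hcont hper hmono_Λ hlo hhi u.2
    ⟨⟨v, hv⟩, hsol⟩
  choose step hstep using hstep
  have hlip : ∀ u v : periodicIcc T lo hi, ∀ x,
      |(Λ * u.1 x - h x (u.1 x)) - (Λ * v.1 x - h x (v.1 x))| ≤ (Λ - δ) * dist u v := fun u v x =>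
    calc _ ≤ (Λ - δ) * |u.1 x - v.1 x| :=
          abs_sub_le_of_monotoneOn_of_monotoneOn (hmono_Λ x)
            ((hmono_δ x).congr fun y _ => by ring) (u.2.2 x) (v.2.2 x)
      _ ≤ (Λ - δ) * dist u v := mul_le_mul_of_nonneg_left
          (u.1.dist_coe_le_dist (g := v.1) x) (sub_nonneg.2 hδΛ)
  have hK : 0 ≤ (Λ - δ) / Λ := div_nonneg (sub_nonneg.2 hδΛ) hΛ.le
  have hcontract : ContractingWith ⟨(Λ - δ) / Λ, hK⟩ step := by
    refine ⟨(div_lt_one hΛ).2 (sub_lt_self Λ hδ), LipschitzWith.of_dist_le_mul fun u v => ?_⟩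
    refine (BoundedContinuousFunction.dist_le (mul_nonneg hK dist_nonneg)).2 fun x => ?_
    simpa only [Real.dist_eq, NNReal.coe_mk, div_mul_eq_mul_div] using
      (hstep u).abs_sub_le_div hT hΛ (hstep v) (hlip u v) x
  obtain ⟨U, hU, -⟩ := exists_mem_periodicIcc_coe_eq hT hlo.contDiff.continuous hlo.periodic
    fun x => left_mem_Icc.2 (hle x)
  have : Nonempty (periodicIcc T lo hi) := ⟨⟨U, hU⟩⟩
  have : CompleteSpace (periodicIcc T lo hi) := isClosed_periodicIcc.completeSpace_coe
  obtain ⟨u, hu⟩ : ∃ u, step u = u := ⟨_, hcontract.fixedPoint_isFixedPt⟩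
  have hsol := hstep u
  rw [hu] at hsol
  exact ⟨u.1, ⟨hsol.contDiff, hsol.periodic, fun x => by rw [hsol.deriv_deriv x]; ring⟩, u.2.2⟩

end LowerUpper

theorem div_sub_div_mem_Icc {k ε M p q : ℝ} (hk : 0 ≤ k) (hε : 0 < ε) (hp : ε ≤ p) (hpq : p ≤ q)
    (hq : q ≤ M) : k / p - k / q ∈ Icc (k / M ^ 2 * (q - p)) (k / ε ^ 2 * (q - p)) := by
  have hp0 : 0 < p := hε.trans_le hp
  have hq0 : 0 < q := hp0.trans_le hpq
  have hfactor : k / p - k / q = k / (p * q) * (q - p) := by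
    field_simp
  have : 0 ≤ q - p := sub_nonneg.2 hpq
  rw [hfactor]
  constructor
  · have : p * q ≤ M ^ 2 := by nlinarith
    gcongr
  · have : ε ^ 2 ≤ p * q := by nlinarith
    gcongr

section SubDiv

variable {g : ℝ → ℝ} {k : ℝ}

/-- With `w'' = g - m` for the mean `m` of `g`, take `w` plus a constant that makes it at least
`k / m`. -/
theorem exists_isPeriodicUpperSolution_sub_div (hT : 0 < T) (hk : 0 < k) (hg : Continuous g)
    (hper : Periodic g T) (hint : 0 < ∫ x in 0..T, g x) :
    ∃ hi δ M, 0 < δ ∧ IsPeriodicUpperSolution (fun x y => g x - k / y) T hi ∧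
      ∀ x, hi x ∈ Icc δ M := by
  set m : ℝ := (∫ x in 0..T, g x) / T
  have hm0 : 0 < m := div_pos hint hT
  have hδ : 0 < k / m := div_pos hk hm0
  obtain ⟨w, hw⟩ := exists_isPeriodicSolution_of_integral_eq_zero (f := fun x => g x - m)
    (by fun_prop) (fun x => by simp only [hper x]) hT.ne'
    (integral_sub_integral_div_eq_zero hg hT.ne')
  obtain ⟨W, hW⟩ := exists_forall_abs_le_of_periodic hw.contDiff.continuous hw.periodic hT.ne'
  have hmem : ∀ x, k / m + W + w x ∈ Icc (k / m) (k / m + 2 * W) := fun x =>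
    ⟨by linarith [(abs_le.1 (hW x)).1], by linarith [(abs_le.1 (hW x)).2]⟩
  refine ⟨fun x => k / m + W + w x, k / m, k / m + 2 * W, hδ,
    ⟨contDiff_const.add hw.contDiff, fun x => by simp only [hw.periodic x], fun x => ?_⟩, hmem⟩
  have hle : k / (k / m + W + w x) ≤ m := (div_le_comm₀ (hδ.trans_le (hmem x).1) hm0).2 (hmem x).1
  simp only [deriv_const_add', hw.deriv_deriv]
  linarith

theorem exists_isPeriodicSolution_sub_div_of_lower_upper {ε M : ℝ} {hi : ℝ → ℝ} (hT : T ≠ 0)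
    (hk : 0 < k) (hg : Continuous g) (hper : Periodic g T) (hε : 0 < ε)
    (hlo : IsPeriodicLowerSolution (fun x y => g x - k / y) T fun _ => ε)
    (hhi : IsPeriodicUpperSolution (fun x y => g x - k / y) T hi) (hmem : ∀ x, hi x ∈ Icc ε M) :
    ∃ u, IsPeriodicSolution (fun x y => g x - k / y) T u ∧ ∀ x, 0 < u x := by
  have hεM : ε ≤ M := (hmem 0).1.trans (hmem 0).2
  have hM : 0 < M := hε.trans_le hεM
  have hcont : ContinuousOn (uncurry fun x y => g x - k / y) {p | p.2 ∈ Icc ε (hi p.1)} :=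
    (hg.comp continuous_fst).continuousOn.sub
      (continuousOn_const.div continuousOn_snd fun p hp => (hε.trans_le hp.1).ne')
  have hslope : ∀ x, ∀ p ∈ Icc ε (hi x), ∀ q ∈ Icc ε (hi x), p ≤ q →
      k / p - k / q ∈ Icc (k / M ^ 2 * (q - p)) (k / ε ^ 2 * (q - p)) := fun x p hp q hq hpq =>
    div_sub_div_mem_Icc hk.le hε hp.1 hpq (hq.2.trans (hmem x).2)
  obtain ⟨u, hu, hu_mem⟩ := exists_isPeriodicSolution_mem_Icc hT
    (δ := k / M ^ 2) (Λ := k / ε ^ 2) (by positivity) (by gcongr) hcont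
    (fun y x => by simp only [hper x])
    (fun x p hp q hq hpq => by linarith [(hslope x p hp q hq hpq).1])
    (fun x p hp q hq hpq => by linarith [(hslope x p hp q hq hpq).2])
    hlo hhi (fun x => (hmem x).1)
  exact ⟨u, hu, fun x => hε.trans_le (hu_mem x).1⟩

/-- The lower solution is a constant `ε` with `k / ε ≥ g`. -/
theorem exists_isPeriodicSolution_sub_div_pos (hT : 0 < T) (hk : 0 < k) (hg : Continuous g)
    (hper : Periodic g T) (hint : 0 < ∫ x in 0..T, g x) :
    ∃ u, IsPeriodicSolution (fun x y => g x - k / y) T u ∧ ∀ x, 0 < u x := by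
  obtain ⟨hi, δ, M, hδ, hhi, hmem⟩ := exists_isPeriodicUpperSolution_sub_div hT hk hg hper hint
  obtain ⟨B, hB⟩ := exists_forall_abs_le_of_periodic hg hper hT.ne'
  have hB0 : 0 ≤ B := (abs_nonneg _).trans (hB 0)
  set ε : ℝ := k / (k / δ + B)
  have hε : 0 < ε := by positivity
  have hεδ : ε ≤ δ := (div_le_comm₀ (by positivity) hδ).2 (le_add_of_nonneg_right hB0)
  have hkε : k / ε = k / δ + B := div_div_cancel₀ hk.ne'
  have hlo : IsPeriodicLowerSolution (fun x y => g x - k / y) T fun _ => ε := by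
    refine ⟨contDiff_const, fun _ => rfl, fun x => ?_⟩
    simp only [deriv_const', hkε]
    linarith [(abs_le.1 (hB x)).2, div_pos hk hδ]
  exact exists_isPeriodicSolution_sub_div_of_lower_upper hT.ne' hk hg hper hε hlo hhi
    fun x => ⟨hεδ.trans (hmem x).1, (hmem x).2⟩

end SubDiv

section InverseIntegral

theorem integral_inv_le_div {F : ℝ → ℝ} {η : ℝ} (hT : 0 ≤ T) (hη : 0 < η) (hF : Continuous F)
    (hFη : ∀ x, η ≤ F x) : ∫ x in 0..T, (F x)⁻¹ ≤ T / η := by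
  have hF0 : ∀ x, F x ≠ 0 := fun x => (hη.trans_le (hFη x)).ne'
  calc ∫ x in 0..T, (F x)⁻¹ ≤ ∫ _ in 0..T, η⁻¹ :=
        intervalIntegral.integral_mono_on hT ((hF.inv₀ hF0).intervalIntegrable _ _) (by simp)
          fun x _ => inv_anti₀ hη (hFη x)
    _ = T / η := by
        rw [intervalIntegral.integral_const, sub_zero, smul_eq_mul, div_eq_mul_inv]

theorem le_integral_inv_of_le_mul_add {F : ℝ → ℝ} {a L η : ℝ} (hT : 0 ≤ T) (hL : 0 < L)
    (hη : 0 < η) (hF : Continuous F) (hF0 : ∀ x, 0 < F x)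
    (hFle : ∀ x ∈ Icc a (a + T), F x ≤ L * (x - a) + η) :
    L⁻¹ * Real.log (1 + L * T / η) ≤ ∫ x in a..a + T, (F x)⁻¹ := by
  have hpos : ∀ x ∈ Icc a (a + T), 0 < L * (x - a) + η := fun x hx => (hF0 x).trans_le (hFle x hx)
  have hcont : ContinuousOn (fun x => (L * (x - a) + η)⁻¹) (Icc a (a + T)) :=
    ContinuousOn.inv₀ (by fun_prop) fun x hx => (hpos x hx).ne'
  calc L⁻¹ * Real.log (1 + L * T / η) = ∫ x in a..a + T, (L * x + (η - L * a))⁻¹ := by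
        rw [intervalIntegral.integral_comp_mul_add (fun y => y⁻¹) hL.ne',
          show L * a + (η - L * a) = η by ring, show L * (a + T) + (η - L * a) = η + L * T by ring,
          integral_inv_of_pos hη (by positivity), add_div, div_self hη.ne', smul_eq_mul]
    _ = ∫ x in a..a + T, (L * (x - a) + η)⁻¹ := by
        congr 1 with x
        ring
    _ ≤ ∫ x in a..a + T, (F x)⁻¹ := by
        have hab : a ≤ a + T := le_add_of_nonneg_right hT
        refine intervalIntegral.integral_mono_on hab
          (hcont.intervalIntegrable_of_Icc hab)
          ((hF.inv₀ fun x => (hF0 x).ne').intervalIntegrable _ _) fun x hx => ?_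
        exact inv_anti₀ (hF0 x) (hFle x hx)

variable {G : ℝ → ℝ} {K : ℝ≥0} {x₀ c : ℝ}

theorem exists_le_integral_inv_sub_add (hT : 0 < T) (hG : LipschitzWith K G)
    (hper : Periodic G T) (hmin : ∀ x, G x₀ ≤ G x) (c : ℝ) :
    ∃ η > 0, c ≤ ∫ x in 0..T, (G x - G x₀ + η)⁻¹ := by
  set L : ℝ := K + 1
  have hL : 0 < L := by positivity
  set η : ℝ := L * T * Real.exp (-(L * c)) with hη_def
  have hη : 0 < η := by positivity
  have hratio : L * T / η = Real.exp (L * c) := by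
    rw [hη_def, Real.exp_neg]
    field_simp
  have hcont : Continuous fun x => G x - G x₀ + η := by
    have := hG.continuous
    fun_prop
  have hperF : Periodic (fun x => (G x - G x₀ + η)⁻¹) T := fun x => by simp only [hper x]
  have hgrowth : ∀ x ∈ Icc x₀ (x₀ + T), G x - G x₀ + η ≤ L * (x - x₀) + η := fun x hx => by
    have hdist := (le_abs_self _).trans (hG.dist_le_mul x x₀)
    rw [Real.dist_eq, abs_of_nonneg (sub_nonneg.2 hx.1)] at hdist
    linarith [hx.1]
  refine ⟨η, hη, ?_⟩
  calc c = L⁻¹ * Real.log (Real.exp (L * c)) := by rw [Real.log_exp, inv_mul_cancel_left₀ hL.ne']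
    _ ≤ L⁻¹ * Real.log (1 + L * T / η) := by
        rw [hratio]
        gcongr
        linarith
    _ ≤ ∫ x in x₀..x₀ + T, (G x - G x₀ + η)⁻¹ :=
        le_integral_inv_of_le_mul_add hT.le hL hη hcont
          (fun x => add_pos_of_nonneg_of_pos (sub_nonneg.2 (hmin x)) hη) hgrowth
    _ = ∫ x in 0..T, (G x - G x₀ + η)⁻¹ := by
        simpa only [zero_add] using hperF.intervalIntegral_add_eq x₀ 0

theorem exists_integral_inv_add_eq (hT : 0 < T) (hc : 0 < c) (hG : LipschitzWith K G)
    (hper : Periodic G T) : ∃ e, (∀ x, 0 < G x + e) ∧ ∫ x in 0..T, (G x + e)⁻¹ = c := by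
  obtain ⟨x₀, hmin⟩ := exists_forall_le_of_periodic hG.continuous hper hT.ne'
  -- The parameter `exp t` keeps the denominators positive for all real `t`.
  set F : ℝ → ℝ → ℝ := fun t x => G x - G x₀ + Real.exp t
  have hF : ∀ t x, Real.exp t ≤ F t x := fun t x => le_add_of_nonneg_left (sub_nonneg.2 (hmin x))
  have hF0 : ∀ t x, 0 < F t x := fun t x => (Real.exp_pos t).trans_le (hF t x)
  have hFcont : Continuous (uncurry F) := by
    have := hG.continuous
    simp only [F, uncurry_def]
    fun_prop
  have hcont : Continuous fun t => ∫ x in 0..T, (F t x)⁻¹ :=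
    intervalIntegral.continuous_parametric_intervalIntegral_of_continuous'
      (hFcont.inv₀ fun p => (hF0 p.1 p.2).ne') 0 T
  have hsmall : ∃ t, ∫ x in 0..T, (F t x)⁻¹ ≤ c := by
    refine ⟨Real.log (T / c), ?_⟩
    calc ∫ x in 0..T, (F (Real.log (T / c)) x)⁻¹ ≤ T / Real.exp (Real.log (T / c)) :=
          integral_inv_le_div hT.le (Real.exp_pos _)
            (hFcont.comp (Continuous.prodMk_right _)) (hF _)
      _ = c := by rw [Real.exp_log (div_pos hT hc), div_div_cancel₀ hT.ne']
  have hlarge : ∃ t, c ≤ ∫ x in 0..T, (F t x)⁻¹ := by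
    obtain ⟨η, hη, hle⟩ := exists_le_integral_inv_sub_add hT hG hper hmin c
    exact ⟨Real.log η, by simpa only [F, Real.exp_log hη] using hle⟩
  obtain ⟨t, ht⟩ := mem_range_of_exists_le_of_exists_ge hcont hsmall hlarge
  have hF_eq : ∀ x, G x + (Real.exp t - G x₀) = F t x := fun x => by ring
  exact ⟨Real.exp t - G x₀, fun x => (hF_eq x).symm ▸ hF0 t x, by simp only [hF_eq, ht]⟩

end InverseIntegral

section Normalized

variable {g : ℝ → ℝ} {k c : ℝ}

theorem exists_isPeriodicSolution_pos_integral_inv_eq (hT : 0 < T) (hc : 0 < c)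
    (hg : Continuous g) (hper : Periodic g T) (hint : ∫ x in 0..T, g x = 0) :
    ∃ u, IsPeriodicSolution (fun x _ => g x) T u ∧ (∀ x, 0 < u x) ∧
      ∫ x in 0..T, (u x)⁻¹ = c := by
  obtain ⟨G, hG⟩ := exists_isPeriodicSolution_of_integral_eq_zero hg hper hT.ne' hint
  obtain ⟨K, hK⟩ :=
    exists_lipschitzWith_of_periodic (hG.contDiff.of_le one_le_two) hG.periodic hT.ne'
  obtain ⟨e, hpos, he⟩ := exists_integral_inv_add_eq hT hc hK hG.periodic
  exact ⟨fun x => G x + e, ⟨hG.contDiff.add contDiff_const, fun x => by simp only [hG.periodic x],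
    fun x => by simp only [deriv_add_const', hG.deriv_deriv]⟩, hpos, he⟩

theorem IsPeriodicSolution.mul_integral_inv_eq {u : ℝ → ℝ} (hg : Continuous g)
    (hu : IsPeriodicSolution (fun x y => g x - k / y) T u) (hpos : ∀ x, 0 < u x) :
    k * ∫ x in 0..T, (u x)⁻¹ = ∫ x in 0..T, g x := by
  have hinv : Continuous fun x => k * (u x)⁻¹ :=
    continuous_const.mul (hu.contDiff.continuous.inv₀ fun x => (hpos x).ne')
  have hzero := hu.integral_eq_zero
  simp only [div_eq_mul_inv] at hzero
  rw [intervalIntegral.integral_sub (hg.intervalIntegrable _ _) (hinv.intervalIntegrable _ _),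
    intervalIntegral.integral_const_mul] at hzero
  exact (sub_eq_zero.1 hzero).symm

theorem exists_isPeriodicSolution_sub_div_pos_integral_inv_eq (hT : 0 < T) (hk : 0 ≤ k)
    (hc : 0 < c) (hg : Continuous g) (hper : Periodic g T) (hint : ∫ x in 0..T, g x = k * c) :
    ∃ u, IsPeriodicSolution (fun x y => g x - k / y) T u ∧ (∀ x, 0 < u x) ∧
      ∫ x in 0..T, (u x)⁻¹ = c := by
  rcases hk.eq_or_lt with rfl | hk
  · rw [zero_mul] at hint
    simpa only [zero_div, sub_zero] using
      exists_isPeriodicSolution_pos_integral_inv_eq hT hc hg hper hint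
  · obtain ⟨u, hu, hpos⟩ :=
      exists_isPeriodicSolution_sub_div_pos hT hk hg hper (hint ▸ mul_pos hk hc)
    exact ⟨u, hu, hpos, mul_left_cancel₀ hk.ne' ((hu.mul_integral_inv_eq hg hpos).trans hint)⟩

theorem IsPeriodicSolution.contDiff_infty_of_sub_div {u : ℝ → ℝ} (hg : ContDiff ℝ ∞ g)
    (hu : IsPeriodicSolution (fun x y => g x - k / y) T u) (hpos : ∀ x, 0 < u x) :
    ContDiff ℝ ∞ u :=
  hu.contDiff_infty fun x => (hg.comp contDiff_fst).contDiffAt.sub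
    (contDiffAt_const.div contDiffAt_snd (hpos x).ne')

theorem exists_contDiff_periodic_deriv_deriv_eq {f : ℝ → ℝ} (hf : ContDiff ℝ ∞ f)
    (hper : Periodic f T) (hT : T ≠ 0) (hint : ∫ x in 0..T, f x = 0) :
    ∃ φ, ContDiff ℝ ∞ φ ∧ Periodic φ T ∧ deriv (deriv φ) = f := by
  obtain ⟨φ, hφ⟩ := exists_isPeriodicSolution_of_integral_eq_zero hf.continuous hper hT hint
  exact ⟨φ, hφ.contDiff_infty fun _ => (hf.comp contDiff_fst).contDiffAt, hφ.periodic,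
    funext hφ.deriv_deriv⟩

end Normalized

/-- Solvability of the reduced Kähler–Yang–Mills (large radius limit)
    ODE on the abelian surface with one-variable data. -/
theorem stmt_15 (α a b c : ℝ) (hα : 0 < α)
    (A : ℝ → ℝ) (hA : ContDiff ℝ (⊤ : ℕ∞) A) (hAper : Function.Periodic A 1)
    (hint : ∫ x in (0 : ℝ)..1, A x = 4 * α * (a * c - b ^ 2)) :
    ∃ φ : ℝ → ℝ, ContDiff ℝ (⊤ : ℕ∞) φ ∧ Function.Periodic φ 1 ∧
      (∀ x, 0 < 1 + deriv (deriv φ) x) ∧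
      ∀ x, -(1 / 4) * deriv (deriv (fun y => 1 / (1 + deriv (deriv φ) y))) x
            - 2 * α * (a ^ 2 + c ^ 2)
            - 4 * α * b ^ 2 * (1 + deriv (deriv φ) x)
            + 2 * α * (a + c) ^ 2 = A x := by
  obtain ⟨u, hu, hpos, hnorm⟩ := exists_isPeriodicSolution_sub_div_pos_integral_inv_eq
    (g := fun x => 4 * (4 * α * a * c - A x)) (k := 16 * α * b ^ 2) one_pos (by positivity)
    one_pos (by fun_prop) (fun x => by simp only [hAper x]) (by
      rw [intervalIntegral.integral_const_mul, intervalIntegral.integral_sub (by simp)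
        (hA.continuous.intervalIntegrable _ _), hint, intervalIntegral.integral_const, smul_eq_mul]
      ring)
  have hinv : ContDiff ℝ ∞ fun x => (u x)⁻¹ :=
    (hu.contDiff_infty_of_sub_div (by fun_prop) hpos).inv fun x => (hpos x).ne'
  obtain ⟨φ, hφ, hφper, hφ''⟩ := exists_contDiff_periodic_deriv_deriv_eq
    (hinv.sub contDiff_const) (fun x => by simp only [hu.periodic x]) one_ne_zero
    (f := fun x => (u x)⁻¹ - 1) (by
      rw [intervalIntegral.integral_sub (hinv.continuous.intervalIntegrable _ _) (by simp), hnorm]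
      simp)
  have one_add : ∀ x, 1 + deriv (deriv φ) x = (u x)⁻¹ := fun x => by rw [hφ'']; ring
  refine ⟨φ, hφ, hφper, fun x => (one_add x).symm ▸ inv_pos.2 (hpos x), fun x => ?_⟩
  simp only [one_add, one_div, inv_inv, hu.deriv_deriv x]
  ring
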